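/- Assume that either H_i ≠ {0} for all i ∈ Ω or P is hierarchical, and fix ω : Ω → ℝ^{>0}. Define Q = {μ ∈ Aut(P) : μ is the identity on Ω − K, and ω(i) = ω(μ(i)) and H_i ≅ H_{μ(i)} for all i ∈ Ω}. Then: (i) for every φ ∈ GL_{(P,ω)}(H) there exists a unique λ ∈ Aut(P) with λ the identity on Ω − K and ⟨supp(φ(α))⟩_P = λ[⟨supp(α)⟩_P] for all α ∈ H, and such λ lies in Q; (ii) conversely, any ψ ∈ Aut_S(H) for which there exists μ ∈ Q with ⟨supp(ψ(α))⟩_P = μ[⟨supp(α)⟩_P] for all α ∈ H belongs to GL_{(P,ω)}(H); (iii) the resulting map ζ : GL_{(P,ω)}(H) → Q sending φ to its λ is a surjective group homomorphism with kernel GL_P(H). -/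

import Mathlib

def idl {Ω : Type*} [PartialOrder Ω] (B : Set Ω) : Set Ω := {a | ∃ b ∈ B, a ≤ b}

noncomputable def lenP {Ω : Type*} [PartialOrder Ω] (y : Ω) : ℕ :=
  sSup {n : ℕ | ∃ c : Finset Ω, IsChain (· ≤ ·) (c : Set Ω) ∧ y ∈ c ∧ (∀ x ∈ c, x ≤ y) ∧ c.card = n}

def Hierarchical (Ω : Type*) [PartialOrder Ω] : Prop :=
  ∀ u v : Ω, lenP u + 1 ≤ lenP v → u ≤ v

def hsupp {Ω : Type*} {H : Ω → Type*} [∀ i, Zero (H i)] (β : ∀ i, H i) : Set Ω :=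
  {i | β i ≠ 0}

def Kset {Ω : Type*} (H : Ω → Type*) [∀ i, Zero (H i)] : Set Ω := {i | ∃ x : H i, x ≠ 0}

/-- The `(P,ω)`-weight of `β`. -/
noncomputable def wtw {Ω : Type*} [PartialOrder Ω] {H : Ω → Type*} [∀ i, Zero (H i)]
    (ω : Ω → ℝ) (β : ∀ i, H i) : ℝ :=
  ∑ᶠ i ∈ idl (hsupp β), ω i

/-- Membership in the group `Q` of order automorphisms of the poset. -/
def Qpred (S : Type*) [Ring S] {Ω : Type*} [PartialOrder Ω] (H : Ω → Type*)
    [∀ i, AddCommGroup (H i)] [∀ i, Module S (H i)] (ω : Ω → ℝ) (μ : Ω ≃o Ω) : Prop :=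
  (∀ i ∉ Kset H, μ i = i) ∧
    ∀ i : Ω, ω i = ω (μ i) ∧ Nonempty (H i ≃ₗ[S] H (μ i))

/-- Membership in `GL_{(P,ω)}(H)`, i.e. being a `(P,ω)`-weight isometry. -/
def GLw (S : Type*) [Ring S] {Ω : Type*} [PartialOrder Ω] (H : Ω → Type*)
    [∀ i, AddCommGroup (H i)] [∀ i, Module S (H i)] (ω : Ω → ℝ)
    (φ : (∀ i, H i) ≃ₗ[S] (∀ i, H i)) : Prop :=
  ∀ α : ∀ i, H i, wtw ω (φ α) = wtw ω α

/-- Membership in `GL_P(H)`, i.e. preserving `P`-support. -/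
def GLPsupp (S : Type*) [Ring S] {Ω : Type*} [PartialOrder Ω] (H : Ω → Type*)
    [∀ i, AddCommGroup (H i)] [∀ i, Module S (H i)]
    (φ : (∀ i, H i) ≃ₗ[S] (∀ i, H i)) : Prop :=
  ∀ α : ∀ i, H i, idl (hsupp (φ α)) = idl (hsupp α)

/-!
Write `p i` for the total label of the principal ideal of `i`. If every position of `supp α` has
`p` below `t`, then so has every position of `supp (φ α)`, for a weight isometry `φ`. Together with
the same fact for `φ⁻¹`, this shows that a vector whose support has a greatest position `i` is sent
to a vector whose support has a greatest position `j`, with `p j = p i`. For vectors concentrated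
at `i` this `j` depends only on `i`: if `x` and `y` led to different positions, both positions would
lie in `supp (φ (x + y))`, hence below a third one with the same `p`, whereas `p` is strictly
increasing. The map `i ↦ j` is functorial in `φ`, hence bijective. It is monotone because a vector
with greatest position `i` may be perturbed at any `k < i`, and in the hierarchical case because
`p` determines the length, which determines the order. A poset automorphism preserving `p`
preserves the labels, by induction along the order.
-/

section Weights

theorem strictMono_finsum_mem {ι M : Type*} [Finite ι] [AddCommMonoid M] [PartialOrder M]
    [IsOrderedCancelAddMonoid M] {f : ι → M} (hf : ∀ i, 0 < f i) :
    StrictMono fun s : Set ι ↦ ∑ᶠ i ∈ s, f i := by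
  classical
  intro s t hst
  obtain ⟨j, hjt, hjs⟩ := Set.exists_of_ssubset hst
  simp only [finsum_mem_eq_finite_toFinset_sum f (Set.toFinite _)]
  exact Finset.sum_lt_sum_of_subset (Set.Finite.toFinset_mono hst.subset)
    ((Set.Finite.mem_toFinset _).2 hjt) (by simpa only [Set.Finite.mem_toFinset] using hjs)
    (hf j) fun i _ _ ↦ (hf i).le

variable {Ω : Type*} [PartialOrder Ω] {ω : Ω → ℝ} {i j : Ω}

/-- The weight of the principal ideal generated by `i`, i.e. the `(P,ω)`-weight of any vector
supported exactly at `i`. -/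
noncomputable def principalWeight (ω : Ω → ℝ) (i : Ω) : ℝ :=
  ∑ᶠ k ∈ Set.Iic i, ω k

variable [Finite Ω]

theorem strictMono_principalWeight (hω : ∀ i, 0 < ω i) : StrictMono (principalWeight ω) :=
  fun _ _ h ↦ strictMono_finsum_mem hω (Set.Iic_ssubset_Iic.2 h)

theorem eq_of_le_of_principalWeight_eq (hω : ∀ i, 0 < ω i) (hij : i ≤ j)
    (h : principalWeight ω i = principalWeight ω j) : i = j :=
  hij.eq_of_not_lt fun hlt ↦ (strictMono_principalWeight hω hlt).ne h

theorem principalWeight_eq_add_finsum_Iio (ω : Ω → ℝ) (i : Ω) :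
    principalWeight ω i = ω i + ∑ᶠ k ∈ Set.Iio i, ω k := by
  rw [principalWeight, ← Set.Iio_insert, finsum_mem_insert _ Set.self_notMem_Iio (Set.toFinite _)]

theorem apply_eq_of_principalWeight_apply_eq {μ : Ω ≃o Ω}
    (h : ∀ i, principalWeight ω (μ i) = principalWeight ω i) (i : Ω) : ω (μ i) = ω i := by
  induction i using WellFoundedLT.induction with
  | _ i ih =>
    have hIio : ∑ᶠ k ∈ Set.Iio (μ i), ω k = ∑ᶠ k ∈ Set.Iio i, ω k := by
      rw [← OrderIso.image_Iio, finsum_mem_image μ.injective.injOn]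
      exact finsum_mem_congr rfl ih
    have hi := h i
    rw [principalWeight_eq_add_finsum_Iio, principalWeight_eq_add_finsum_Iio, hIio] at hi
    exact add_right_cancel hi

end Weights

section Hierarchical

variable {Ω : Type*} [PartialOrder Ω]

theorem bddAbove_card_isChain [Finite Ω] (y : Ω) :
    BddAbove {n : ℕ | ∃ c : Finset Ω, IsChain (· ≤ ·) (c : Set Ω) ∧ y ∈ c ∧
      (∀ x ∈ c, x ≤ y) ∧ c.card = n} := by
  have := Fintype.ofFinite Ω
  refine ⟨Fintype.card Ω, ?_⟩
  rintro n ⟨c, -, -, -, rfl⟩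
  exact c.card_le_univ

theorem card_le_lenP [Finite Ω] {c : Finset Ω} {y : Ω} (hc : IsChain (· ≤ ·) (c : Set Ω))
    (hy : y ∈ c) (hle : ∀ x ∈ c, x ≤ y) : c.card ≤ lenP y :=
  le_csSup (bddAbove_card_isChain y) ⟨c, hc, hy, hle, rfl⟩

theorem exists_isChain_card_eq_lenP [Finite Ω] (y : Ω) :
    ∃ c : Finset Ω, IsChain (· ≤ ·) (c : Set Ω) ∧ y ∈ c ∧ (∀ x ∈ c, x ≤ y) ∧ c.card = lenP y := by
  refine Nat.sSup_mem ?_ (bddAbove_card_isChain y)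
  exact ⟨1, {y}, by simp, by simp, by simp, Finset.card_singleton y⟩

theorem strictMono_lenP [Finite Ω] : StrictMono (lenP : Ω → ℕ) := by
  classical
  intro i j hij
  obtain ⟨c, hc, -, hle, hcard⟩ := exists_isChain_card_eq_lenP i
  have hj : j ∉ c := fun hj ↦ hij.not_ge (hle j hj)
  have hle' : ∀ x ∈ insert j c, x ≤ j :=
    (Finset.forall_mem_insert ..).2 ⟨le_rfl, fun x hx ↦ (hle x hx).trans hij.le⟩
  have hchain : IsChain (· ≤ ·) ((insert j c : Finset Ω) : Set Ω) := by
    rw [Finset.coe_insert]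
    exact hc.insert fun b hb _ ↦ Or.inr ((hle b hb).trans hij.le)
  calc lenP i < (insert j c).card := by
        rw [Finset.card_insert_of_notMem hj, hcard]; exact Nat.lt_succ_self _
    _ ≤ lenP j := card_le_lenP hchain (Finset.mem_insert_self j c) hle'

theorem Hierarchical.lt_of_lenP_lt (hΩ : Hierarchical Ω) {i j : Ω} (h : lenP i < lenP j) :
    i < j :=
  (hΩ i j h).lt_of_ne (ne_of_apply_ne lenP h.ne)

theorem Hierarchical.lenP_eq_of_principalWeight_eq [Finite Ω] (hΩ : Hierarchical Ω) {ω : Ω → ℝ}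
    (hω : ∀ i, 0 < ω i) {i j : Ω} (h : principalWeight ω i = principalWeight ω j) :
    lenP i = lenP j := by
  have hmono := strictMono_principalWeight hω
  rcases lt_trichotomy (lenP i) (lenP j) with hlt | heq | hgt
  · exact absurd h (hmono (hΩ.lt_of_lenP_lt hlt)).ne
  · exact heq
  · exact absurd h (hmono (hΩ.lt_of_lenP_lt hgt)).ne'

end Hierarchical

section Support

theorem mem_hsupp {Ω : Type*} {H : Ω → Type*} [∀ i, Zero (H i)] {β : ∀ i, H i} {i : Ω} :
    i ∈ hsupp β ↔ β i ≠ 0 :=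
  Iff.rfl

variable {Ω : Type*} [PartialOrder Ω]

theorem idl_eq_Iic_iff {B : Set Ω} {j : Ω} : idl B = Set.Iic j ↔ IsGreatest B j := by
  constructor
  · intro h
    have hB : B ⊆ Set.Iic j := fun b hb ↦ h ▸ ⟨b, hb, le_rfl⟩
    obtain ⟨b, hb, hjb⟩ : j ∈ idl B := h ▸ Set.mem_Iic.2 le_rfl
    exact ⟨hjb.antisymm (hB hb) ▸ hb, hB⟩
  · exact fun h ↦ Set.Subset.antisymm (fun _ ⟨_, hb, hab⟩ ↦ hab.trans (h.2 hb))
      fun _ ha ↦ ⟨j, h.1, ha⟩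

theorem image_idl {Ω' : Type*} [PartialOrder Ω'] (μ : Ω ≃o Ω') (B : Set Ω) :
    μ '' idl B = idl (μ '' B) := by
  ext a
  simp only [OrderIso.image_eq_preimage_symm, Set.mem_preimage, idl, Set.mem_ofPred_eq,
    μ.surjective.exists, OrderIso.symm_apply_apply, OrderIso.symm_apply_le]

variable {H : Ω → Type*} [∀ i, Zero (H i)]

theorem isGreatest_hsupp_single [DecidableEq Ω] {i : Ω} {x : H i} (hx : x ≠ 0) :
    IsGreatest (hsupp (Pi.single i x)) i := by
  refine ⟨by rwa [mem_hsupp, Pi.single_eq_same], fun k hk ↦ ?_⟩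
  by_contra hki
  exact hk (Pi.single_eq_of_ne (ne_of_not_le hki) x)

theorem orderIso_eq_of_image_idl_hsupp_eq {Ω' : Type*} [PartialOrder Ω'] {f g : Ω ≃o Ω'}
    (hK : ∀ i ∉ Kset H, f i = g i)
    (h : ∀ α : ∀ i, H i, f '' idl (hsupp α) = g '' idl (hsupp α)) : f = g := by
  classical
  ext i
  by_cases hi : i ∈ Kset H
  · obtain ⟨x, hx⟩ := hi
    have hIic := h (Pi.single i x)
    rw [idl_eq_Iic_iff.2 (isGreatest_hsupp_single hx), OrderIso.image_Iic,
      OrderIso.image_Iic] at hIic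
    exact Set.Iic_injective hIic
  · exact hK i hi

variable {ω : Ω → ℝ} {β : ∀ i, H i} {j : Ω}

theorem wtw_eq_principalWeight (h : IsGreatest (hsupp β) j) :
    wtw ω β = principalWeight ω j := by
  rw [wtw, idl_eq_Iic_iff.2 h, principalWeight]

variable [Finite Ω]

theorem principalWeight_le_wtw (hω : ∀ i, 0 < ω i) (hj : j ∈ hsupp β) :
    principalWeight ω j ≤ wtw ω β :=
  (strictMono_finsum_mem hω).monotone fun _ hk ↦ ⟨j, hj, hk⟩

theorem isGreatest_hsupp_of_wtw_eq (hω : ∀ i, 0 < ω i) (hj : j ∈ hsupp β)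
    (hw : wtw ω β = principalWeight ω j) : IsGreatest (hsupp β) j := by
  have hsub : Set.Iic j ⊆ idl (hsupp β) := fun _ hk ↦ ⟨j, hj, hk⟩
  exact idl_eq_Iic_iff.1 <| .symm <|
    hsub.eq_of_not_ssubset fun hss ↦ (strictMono_finsum_mem hω hss).ne hw.symm

end Support

section Additive

variable {Ω : Type*} [DecidableEq Ω] {H : Ω → Type*} [∀ i, AddCommMonoid (H i)]

theorem single_add_update_zero (α : ∀ i, H i) (i : Ω) :
    Pi.single i (α i) + Function.update α i 0 = α := by
  ext k
  rcases eq_or_ne k i with rfl | hk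
  · simp
  · simp [hk]

theorem exists_mem_hsupp_map_single [Finite Ω] {ι F : Type*} {H' : ι → Type*}
    [∀ i, AddCommMonoid (H' i)] [FunLike F (∀ i, H i) (∀ j, H' j)]
    [AddMonoidHomClass F (∀ i, H i) (∀ j, H' j)] (φ : F) {α : ∀ i, H i} {j : ι}
    (hj : j ∈ hsupp (φ α)) : ∃ i ∈ hsupp α, j ∈ hsupp (φ (Pi.single i (α i))) := by
  have := Fintype.ofFinite Ω
  have hsum : φ α j = ∑ i, φ (Pi.single i (α i)) j := by
    rw [← Finset.sum_apply, ← map_sum, Finset.univ_sum_single]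
  obtain ⟨i, -, hi⟩ := Finset.exists_ne_zero_of_sum_ne_zero (hsum.symm.trans_ne hj)
  refine ⟨i, fun hαi ↦ hi ?_, hi⟩
  rw [hαi, Pi.single_zero, map_zero, Pi.zero_apply]

end Additive

section Groups

variable (S : Type*) [Semiring S] {Ω : Type*} [PartialOrder Ω] (H : Ω → Type*)
  [∀ i, AddCommMonoid (H i)] [∀ i, Module S (H i)]

/-- The group `GL_{(P,ω)}(H)` of `(P,ω)`-weight isometries. -/
def weightGL (ω : Ω → ℝ) : Subgroup ((∀ i, H i) ≃ₗ[S] (∀ i, H i)) where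
  carrier := {φ | ∀ α, wtw ω (φ α) = wtw ω α}
  mul_mem' hφ hψ α := (hφ _).trans (hψ α)
  one_mem' _ := rfl
  inv_mem' {φ} hφ α := by
    rw [← hφ, LinearEquiv.coe_inv, LinearEquiv.apply_symm_apply]

/-- The group `GL_P(H)` of automorphisms preserving the ideal generated by the support. -/
def supportGL : Subgroup ((∀ i, H i) ≃ₗ[S] (∀ i, H i)) where
  carrier := {φ | ∀ α, idl (hsupp (φ α)) = idl (hsupp α)}
  mul_mem' hφ hψ α := (hφ _).trans (hψ α)
  one_mem' _ := rfl
  inv_mem' {φ} hφ α := by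
    rw [← hφ, LinearEquiv.coe_inv, LinearEquiv.apply_symm_apply]

/-- The group `Q` of the poset automorphisms that preserve the labels `ω i` and the isomorphism
types of the `H i`, and fix the positions outside `Kset H`. -/
def labelAut (ω : Ω → ℝ) : Subgroup (Ω ≃o Ω) where
  carrier := {μ | (∀ i ∉ Kset H, μ i = i) ∧ ∀ i, ω i = ω (μ i) ∧ Nonempty (H i ≃ₗ[S] H (μ i))}
  mul_mem' {μ ν} hμ hν := by
    refine ⟨fun i hi ↦ by rw [RelIso.mul_apply, hν.1 i hi, hμ.1 i hi], fun i ↦ ?_⟩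
    obtain ⟨e⟩ := (hν.2 i).2
    obtain ⟨e'⟩ := (hμ.2 (ν i)).2
    exact ⟨(hν.2 i).1.trans (hμ.2 (ν i)).1, ⟨e.trans e'⟩⟩
  one_mem' := ⟨fun _ _ ↦ rfl, fun i ↦ ⟨rfl, ⟨LinearEquiv.refl S (H i)⟩⟩⟩
  inv_mem' {μ} hμ := by
    refine ⟨fun i hi ↦ (OrderIso.symm_apply_eq μ).2 (hμ.1 i hi).symm, fun i ↦ ?_⟩
    obtain ⟨hω, ⟨e⟩⟩ := hμ.2 (μ⁻¹ i)
    rw [RelIso.apply_inv_self] at hω e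
    exact ⟨hω.symm, ⟨e.symm⟩⟩

end Groups

section WeightIsometry

variable {S : Type*} [Semiring S] {Ω : Type*} [PartialOrder Ω] {H : Ω → Type*}
  [∀ i, AddCommMonoid (H i)] [∀ i, Module S (H i)] {ω : Ω → ℝ}
  {φ : (∀ i, H i) ≃ₗ[S] (∀ i, H i)} {α : ∀ i, H i} {i j : Ω}

theorem principalWeight_eq_of_isGreatest_map (hφ : φ ∈ weightGL S H ω)
    (hα : IsGreatest (hsupp α) i) (hφα : IsGreatest (hsupp (φ α)) j) :
    principalWeight ω j = principalWeight ω i := by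
  rw [← wtw_eq_principalWeight hα, ← wtw_eq_principalWeight hφα, hφ]

variable [Finite Ω]

theorem principalWeight_lt_of_mem_hsupp_map (hω : ∀ i, 0 < ω i) (hφ : φ ∈ weightGL S H ω) {t : ℝ}
    (hα : ∀ k ∈ hsupp α, principalWeight ω k < t) (hj : j ∈ hsupp (φ α)) :
    principalWeight ω j < t := by
  classical
  obtain ⟨i, hi, hij⟩ := exists_mem_hsupp_map_single φ hj
  calc principalWeight ω j ≤ wtw ω (φ (Pi.single i (α i))) := principalWeight_le_wtw hω hij
    _ = wtw ω (Pi.single i (α i)) := hφ _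
    _ = principalWeight ω i := wtw_eq_principalWeight (isGreatest_hsupp_single hi)
    _ < t := hα i hi

theorem exists_isGreatest_hsupp_map (hω : ∀ i, 0 < ω i) (hφ : φ ∈ weightGL S H ω)
    (hα : IsGreatest (hsupp α) i) : ∃ j, IsGreatest (hsupp (φ α)) j := by
  have hw : wtw ω (φ α) = principalWeight ω i := (hφ α).trans (wtw_eq_principalWeight hα)
  obtain ⟨j, hj, hji⟩ : ∃ j ∈ hsupp (φ α), principalWeight ω j = principalWeight ω i := by
    by_contra! hne
    have hlt : ∀ j ∈ hsupp (φ α), principalWeight ω j < principalWeight ω i := fun j hj ↦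
      ((principalWeight_le_wtw hω hj).trans_eq hw).lt_of_ne (hne j hj)
    have hi : i ∈ hsupp (φ⁻¹ (φ α)) := by
      rw [LinearEquiv.coe_inv, LinearEquiv.symm_apply_apply]; exact hα.1
    exact lt_irrefl _ (principalWeight_lt_of_mem_hsupp_map hω (inv_mem hφ) hlt hi)
  exact ⟨j, isGreatest_hsupp_of_wtw_eq hω hj (hw.trans hji.symm)⟩

theorem map_apply_eq_map_single_apply [DecidableEq Ω] (hω : ∀ i, 0 < ω i)
    (hφ : φ ∈ weightGL S H ω) (hij : principalWeight ω j = principalWeight ω i)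
    (hα : ∀ k ∈ hsupp α, k ≤ i) : φ α j = φ (Pi.single i (α i)) j := by
  have hlt : ∀ k ∈ hsupp (Function.update α i 0), principalWeight ω k < principalWeight ω i := by
    intro k hk
    have hki : k ≠ i := by rintro rfl; exact hk (Function.update_self ..)
    rw [mem_hsupp, Function.update_of_ne hki] at hk
    exact strictMono_principalWeight hω ((hα k hk).lt_of_ne hki)
  have hrest : φ (Function.update α i 0) j = 0 := by
    by_contra hj
    exact (principalWeight_lt_of_mem_hsupp_map hω hφ hlt hj).ne hij
  conv_lhs => rw [← single_add_update_zero α i, map_add, Pi.add_apply, hrest, add_zero]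

theorem isGreatest_map_single_unique [DecidableEq Ω] (hω : ∀ i, 0 < ω i) (hφ : φ ∈ weightGL S H ω)
    {x y : H i} {k : Ω} (hx : x ≠ 0) (hy : y ≠ 0)
    (hj : IsGreatest (hsupp (φ (Pi.single i x))) j)
    (hk : IsGreatest (hsupp (φ (Pi.single i y))) k) : j = k := by
  have hji := principalWeight_eq_of_isGreatest_map hφ (isGreatest_hsupp_single hx) hj
  have hki := principalWeight_eq_of_isGreatest_map hφ (isGreatest_hsupp_single hy) hk
  by_contra hjk
  have hyj : φ (Pi.single i y) j = 0 := by
    by_contra hne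
    exact hjk (eq_of_le_of_principalWeight_eq hω (hk.2 hne) (hji.trans hki.symm))
  have hxk : φ (Pi.single i x) k = 0 := by
    by_contra hne
    exact hjk (eq_of_le_of_principalWeight_eq hω (hj.2 hne) (hki.trans hji.symm)).symm
  have hsum : φ (Pi.single i (x + y)) = φ (Pi.single i x) + φ (Pi.single i y) := by
    rw [Pi.single_add, map_add]
  have hj' : j ∈ hsupp (φ (Pi.single i (x + y))) := by
    rw [hsum, mem_hsupp, Pi.add_apply, hyj, add_zero]; exact hj.1
  have hk' : k ∈ hsupp (φ (Pi.single i (x + y))) := by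
    rw [hsum, mem_hsupp, Pi.add_apply, hxk, zero_add]; exact hk.1
  have hxy : x + y ≠ 0 := by
    intro h0
    rw [h0, Pi.single_zero, map_zero] at hj'
    exact hj' rfl
  obtain ⟨l, hl⟩ := exists_isGreatest_hsupp_map hω hφ (isGreatest_hsupp_single hxy)
  have hli := principalWeight_eq_of_isGreatest_map hφ (isGreatest_hsupp_single hxy) hl
  have hjl := eq_of_le_of_principalWeight_eq hω (hl.2 hj') (hji.trans hli.symm)
  have hkl := eq_of_le_of_principalWeight_eq hω (hl.2 hk') (hki.trans hli.symm)
  exact hjk (hjl.trans hkl.symm)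

end WeightIsometry

section LeadMap

variable {S : Type*} [Semiring S] {Ω : Type*} [PartialOrder Ω] [DecidableEq Ω] {H : Ω → Type*}
  [∀ i, AddCommMonoid (H i)] [∀ i, Module S (H i)] {ω : Ω → ℝ}
  {φ ψ : (∀ i, H i) ≃ₗ[S] (∀ i, H i)} {α : ∀ i, H i} {i : Ω}

open Classical in
/-- The map sending `i` to the greatest position in the support of the image under `φ` of a vector
supported at `i`. For a weight isometry the vector does not matter; where there is none (`H i`
trivial), `i` is sent to itself. -/
noncomputable def leadMap (φ : (∀ i, H i) ≃ₗ[S] (∀ i, H i)) (i : Ω) : Ω :=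
  if h : ∃ j, ∃ x : H i, IsGreatest (hsupp (φ (Pi.single i x))) j then h.choose else i

theorem ne_zero_of_isGreatest_map_single {x : H i} {j : Ω}
    (h : IsGreatest (hsupp (φ (Pi.single i x))) j) : x ≠ 0 := by
  rintro rfl
  exact h.1 (by rw [Pi.single_zero, map_zero, Pi.zero_apply])

theorem leadMap_of_notMem_Kset (φ : (∀ i, H i) ≃ₗ[S] (∀ i, H i)) (hi : i ∉ Kset H) :
    leadMap φ i = i :=
  dif_neg fun ⟨_, x, hx⟩ ↦ hi ⟨x, ne_zero_of_isGreatest_map_single hx⟩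

variable [Finite Ω]

theorem isGreatest_leadMap (hω : ∀ i, 0 < ω i) (hφ : φ ∈ weightGL S H ω) {x : H i} (hx : x ≠ 0) :
    IsGreatest (hsupp (φ (Pi.single i x))) (leadMap φ i) := by
  obtain ⟨j, hj⟩ := exists_isGreatest_hsupp_map hω hφ (isGreatest_hsupp_single hx)
  have hex : ∃ j, ∃ x : H i, IsGreatest (hsupp (φ (Pi.single i x))) j := ⟨j, x, hj⟩
  obtain ⟨y, hy⟩ := hex.choose_spec
  rw [leadMap, dif_pos hex,
    ← isGreatest_map_single_unique hω hφ hx (ne_zero_of_isGreatest_map_single hy) hj hy]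
  exact hj

theorem principalWeight_leadMap (hω : ∀ i, 0 < ω i) (hφ : φ ∈ weightGL S H ω) (i : Ω) :
    principalWeight ω (leadMap φ i) = principalWeight ω i := by
  by_cases hi : i ∈ Kset H
  · obtain ⟨x, hx⟩ := hi
    exact principalWeight_eq_of_isGreatest_map hφ (isGreatest_hsupp_single hx)
      (isGreatest_leadMap hω hφ hx)
  · rw [leadMap_of_notMem_Kset φ hi]

theorem isGreatest_hsupp_map (hω : ∀ i, 0 < ω i) (hφ : φ ∈ weightGL S H ω)
    (hα : IsGreatest (hsupp α) i) : IsGreatest (hsupp (φ α)) (leadMap φ i) := by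
  have hw := principalWeight_leadMap hω hφ i
  have hmem : leadMap φ i ∈ hsupp (φ α) := by
    rw [mem_hsupp, map_apply_eq_map_single_apply hω hφ hw fun _ hk ↦ hα.2 hk]
    exact (isGreatest_leadMap hω hφ hα.1).1
  exact isGreatest_hsupp_of_wtw_eq hω hmem <| by rw [hφ, wtw_eq_principalWeight hα, hw]

theorem leadMap_one (hω : ∀ i, 0 < ω i) (i : Ω) :
    leadMap (1 : (∀ i, H i) ≃ₗ[S] (∀ i, H i)) i = i := by
  by_cases hi : i ∈ Kset H
  · obtain ⟨x, hx⟩ := hi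
    exact (isGreatest_leadMap hω (one_mem _) hx).unique (isGreatest_hsupp_single hx)
  · exact leadMap_of_notMem_Kset 1 hi

theorem leadMap_mul (hω : ∀ i, 0 < ω i) (hφ : φ ∈ weightGL S H ω) (hψ : ψ ∈ weightGL S H ω)
    (i : Ω) : leadMap (φ * ψ) i = leadMap φ (leadMap ψ i) := by
  by_cases hi : i ∈ Kset H
  · obtain ⟨x, hx⟩ := hi
    exact (isGreatest_leadMap hω (mul_mem hφ hψ) hx).unique
      (isGreatest_hsupp_map hω hφ (isGreatest_leadMap hω hψ hx))
  · rw [leadMap_of_notMem_Kset ψ hi, leadMap_of_notMem_Kset φ hi,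
      leadMap_of_notMem_Kset (φ * ψ) hi]

theorem leadMap_inv_leadMap (hω : ∀ i, 0 < ω i) (hφ : φ ∈ weightGL S H ω) (i : Ω) :
    leadMap φ⁻¹ (leadMap φ i) = i := by
  rw [← leadMap_mul hω (inv_mem hφ) hφ, inv_mul_cancel, leadMap_one hω]

theorem leadMap_leadMap_inv (hω : ∀ i, 0 < ω i) (hφ : φ ∈ weightGL S H ω) (i : Ω) :
    leadMap φ (leadMap φ⁻¹ i) = i := by
  rw [← leadMap_mul hω hφ (inv_mem hφ), mul_inv_cancel, leadMap_one hω]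

theorem leadMap_le_leadMap (hω : ∀ i, 0 < ω i) (hφ : φ ∈ weightGL S H ω) {k : Ω}
    (hk : k ∈ Kset H) (hi : i ∈ Kset H) (hki : k < i) : leadMap φ k ≤ leadMap φ i := by
  obtain ⟨x, hx⟩ := hi
  obtain ⟨y, hy⟩ := hk
  have hgreatest : IsGreatest (hsupp (Pi.single i x + Pi.single k y : ∀ i, H i)) i := by
    refine ⟨?_, fun b hb ↦ ?_⟩
    · simpa [mem_hsupp, hki.ne'] using hx
    · by_contra hbi
      have hbk : b ≠ k := by rintro rfl; exact hbi hki.le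
      exact hb (by simp [ne_of_not_le hbi |>.symm, hbk])
  by_cases hmem : leadMap φ k ∈ hsupp (φ (Pi.single i x))
  · exact (isGreatest_leadMap hω hφ hx).2 hmem
  · refine (isGreatest_hsupp_map hω hφ hgreatest).2 ?_
    have hzero : φ (Pi.single i x) (leadMap φ k) = 0 := not_not.1 hmem
    rw [mem_hsupp, map_add, Pi.add_apply, hzero, zero_add]
    exact (isGreatest_leadMap hω hφ hy).1

theorem monotone_leadMap (hH : (∀ i : Ω, ∃ x : H i, x ≠ 0) ∨ Hierarchical Ω)
    (hω : ∀ i, 0 < ω i) (hφ : φ ∈ weightGL S H ω) : Monotone (leadMap φ) := by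
  refine monotone_iff_forall_lt.2 fun k i hki ↦ ?_
  rcases hH with hK | hΩ
  · exact leadMap_le_leadMap hω hφ (hK k) (hK i) hki
  · have hlen (i : Ω) : lenP (leadMap φ i) = lenP i :=
      hΩ.lenP_eq_of_principalWeight_eq hω (principalWeight_leadMap hω hφ i)
    refine hΩ _ _ ?_
    rw [hlen, hlen]
    exact strictMono_lenP hki

theorem inv_single_leadMap_apply (hω : ∀ i, 0 < ω i) (hφ : φ ∈ weightGL S H ω) (x : H i) :
    φ⁻¹ (Pi.single (leadMap φ i) (φ (Pi.single i x) (leadMap φ i))) i = x := by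
  have hle : ∀ k ∈ hsupp (φ (Pi.single i x)), k ≤ leadMap φ i := by
    rcases eq_or_ne x 0 with rfl | hx
    · intro k hk
      exact absurd (by rw [Pi.single_zero, map_zero, Pi.zero_apply]) hk
    · exact fun k hk ↦ (isGreatest_leadMap hω hφ hx).2 hk
  rw [← map_apply_eq_map_single_apply hω (inv_mem hφ) (principalWeight_leadMap hω hφ i).symm hle,
    LinearEquiv.coe_inv, LinearEquiv.symm_apply_apply, Pi.single_eq_same]

theorem nonempty_linearEquiv_leadMap (hω : ∀ i, 0 < ω i) (hφ : φ ∈ weightGL S H ω) (i : Ω) :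
    Nonempty (H i ≃ₗ[S] H (leadMap φ i)) := by
  have hinv := inv_single_leadMap_apply (i := leadMap φ i) hω (inv_mem hφ)
  rw [leadMap_inv_leadMap hω hφ, inv_inv] at hinv
  exact ⟨.ofLinearMap
    (.proj (leadMap φ i) ∘ₗ φ.toLinearMap ∘ₗ .single S H i)
    (.proj i ∘ₗ φ⁻¹.toLinearMap ∘ₗ .single S H (leadMap φ i))
    (LinearMap.ext hinv) (LinearMap.ext (inv_single_leadMap_apply hω hφ))⟩

/-- `leadMap φ` as an automorphism of the poset: this is the `λ` attached to `φ`. -/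
noncomputable def leadIso (hH : (∀ i : Ω, ∃ x : H i, x ≠ 0) ∨ Hierarchical Ω)
    (hω : ∀ i, 0 < ω i) (hφ : φ ∈ weightGL S H ω) : Ω ≃o Ω :=
  Equiv.toOrderIso
    ⟨leadMap φ, leadMap φ⁻¹, leadMap_inv_leadMap hω hφ, leadMap_leadMap_inv hω hφ⟩
    (monotone_leadMap hH hω hφ) (monotone_leadMap hH hω (inv_mem hφ))

theorem idl_hsupp_map_subset (hH : (∀ i : Ω, ∃ x : H i, x ≠ 0) ∨ Hierarchical Ω)
    (hω : ∀ i, 0 < ω i) (hφ : φ ∈ weightGL S H ω) (α : ∀ i, H i) :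
    idl (hsupp (φ α)) ⊆ leadIso hH hω hφ '' idl (hsupp α) := by
  rintro a ⟨b, hb, hab⟩
  obtain ⟨i, hi, hbi⟩ := exists_mem_hsupp_map_single φ hb
  rw [image_idl]
  exact ⟨leadMap φ i, ⟨i, hi, rfl⟩, hab.trans ((isGreatest_leadMap hω hφ hi).2 hbi)⟩

theorem idl_hsupp_map (hH : (∀ i : Ω, ∃ x : H i, x ≠ 0) ∨ Hierarchical Ω)
    (hω : ∀ i, 0 < ω i) (hφ : φ ∈ weightGL S H ω) (α : ∀ i, H i) :
    idl (hsupp (φ α)) = leadIso hH hω hφ '' idl (hsupp α) := by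
  refine (idl_hsupp_map_subset hH hω hφ α).antisymm ?_
  rintro _ ⟨a, ha, rfl⟩
  have hsub := idl_hsupp_map_subset hH hω (inv_mem hφ) (φ α)
  rw [LinearEquiv.coe_inv, LinearEquiv.symm_apply_apply] at hsub
  obtain ⟨b, hb, rfl⟩ := hsub ha
  have hcancel : leadIso hH hω hφ (leadIso hH hω (inv_mem hφ) b) = b :=
    leadMap_leadMap_inv hω hφ b
  rwa [hcancel]

theorem leadIso_mem_labelAut (hH : (∀ i : Ω, ∃ x : H i, x ≠ 0) ∨ Hierarchical Ω)
    (hω : ∀ i, 0 < ω i) (hφ : φ ∈ weightGL S H ω) : leadIso hH hω hφ ∈ labelAut S H ω :=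
  ⟨fun _ ↦ leadMap_of_notMem_Kset φ, fun i ↦
    ⟨(apply_eq_of_principalWeight_apply_eq (μ := leadIso hH hω hφ)
        (principalWeight_leadMap hω hφ) i).symm,
      nonempty_linearEquiv_leadMap hω hφ i⟩⟩

theorem eq_leadIso (hH : (∀ i : Ω, ∃ x : H i, x ≠ 0) ∨ Hierarchical Ω)
    (hω : ∀ i, 0 < ω i) (hφ : φ ∈ weightGL S H ω) {μ : Ω ≃o Ω} (hμ : ∀ i ∉ Kset H, μ i = i)
    (h : ∀ α : ∀ i, H i, idl (hsupp (φ α)) = μ '' idl (hsupp α)) : μ = leadIso hH hω hφ :=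
  orderIso_eq_of_image_idl_hsupp_eq
    (fun i hi ↦ (hμ i hi).trans ((leadIso_mem_labelAut hH hω hφ).1 i hi).symm)
    fun α ↦ (h α).symm.trans (idl_hsupp_map hH hω hφ α)

/-- The homomorphism `ζ : GL_{(P,ω)}(H) → Q` sending a weight isometry to its automorphism of
the poset. -/
noncomputable def leadHom (hH : (∀ i : Ω, ∃ x : H i, x ≠ 0) ∨ Hierarchical Ω)
    (hω : ∀ i, 0 < ω i) : weightGL S H ω →* labelAut S H ω :=
  MonoidHom.mk' (fun φ ↦ ⟨leadIso hH hω φ.2, leadIso_mem_labelAut hH hω φ.2⟩) fun φ ψ ↦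
    Subtype.ext <| OrderIso.ext <| funext <| leadMap_mul hω φ.2 ψ.2

end LeadMap

section LabelAut

variable {S : Type*} [Semiring S] {Ω : Type*} [PartialOrder Ω] {H : Ω → Type*}
  [∀ i, AddCommMonoid (H i)] [∀ i, Module S (H i)] {ω : Ω → ℝ} {μ : Ω ≃o Ω}

theorem mem_weightGL_of_idl_hsupp_map {ψ : (∀ i, H i) ≃ₗ[S] (∀ i, H i)}
    (hμ : μ ∈ labelAut S H ω) (h : ∀ α, idl (hsupp (ψ α)) = μ '' idl (hsupp α)) :
    ψ ∈ weightGL S H ω := fun α ↦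
  calc wtw ω (ψ α) = ∑ᶠ i ∈ μ '' idl (hsupp α), ω i := by rw [wtw, h]
    _ = ∑ᶠ i ∈ idl (hsupp α), ω (μ i) := finsum_mem_image μ.injective.injOn
    _ = wtw ω α := finsum_mem_congr rfl fun i _ ↦ (hμ.2 i).1.symm

theorem exists_idl_hsupp_map_eq_image (hμ : μ ∈ labelAut S H ω) :
    ∃ ψ : (∀ i, H i) ≃ₗ[S] (∀ i, H i), ∀ α, idl (hsupp (ψ α)) = μ '' idl (hsupp α) := by
  let e (i : Ω) : H i ≃ₗ[S] H (μ i) := (hμ.2 i).2.some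
  let ψ : (∀ i, H i) ≃ₗ[S] (∀ i, H i) :=
    (LinearEquiv.piCongrRight e).trans (LinearEquiv.piCongrLeft S H μ.toEquiv)
  have hψ (α : ∀ i, H i) (i : Ω) : ψ α (μ i) = e i (α i) :=
    Equiv.piCongrLeft_apply_apply H μ.toEquiv _ i
  refine ⟨ψ, fun α ↦ ?_⟩
  rw [image_idl]
  congr 1
  ext b
  obtain ⟨i, rfl⟩ := μ.surjective b
  rw [μ.injective.mem_set_image, mem_hsupp, mem_hsupp, hψ, LinearEquiv.map_ne_zero_iff]

variable [Finite Ω] [DecidableEq Ω]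

theorem leadHom_surjective (hH : (∀ i : Ω, ∃ x : H i, x ≠ 0) ∨ Hierarchical Ω)
    (hω : ∀ i, 0 < ω i) : Function.Surjective (leadHom (S := S) hH hω) := fun μ ↦ by
  obtain ⟨ψ, hψ⟩ := exists_idl_hsupp_map_eq_image μ.2
  have hψω := mem_weightGL_of_idl_hsupp_map μ.2 hψ
  exact ⟨⟨ψ, hψω⟩, Subtype.ext (eq_leadIso hH hω hψω μ.2.1 hψ).symm⟩

theorem ker_leadHom (hH : (∀ i : Ω, ∃ x : H i, x ≠ 0) ∨ Hierarchical Ω) (hω : ∀ i, 0 < ω i) :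
    (leadHom hH hω).ker = (supportGL S H).subgroupOf (weightGL S H ω) := by
  ext φ
  constructor
  · intro hφ α
    have hone : leadIso hH hω φ.2 = 1 := congrArg Subtype.val hφ
    have hidl := idl_hsupp_map hH hω φ.2 α
    rwa [hone, RelIso.coe_one, Set.image_id] at hidl
  · intro hφ
    refine Subtype.ext (eq_leadIso hH hω φ.2 (fun _ _ ↦ rfl) fun α ↦ ?_).symm
    rw [OneMemClass.coe_one, RelIso.coe_one, Set.image_id]
    exact hφ α

end LabelAut

theorem stmt4_general {Ω : Type*} [Finite Ω] [PartialOrder Ω] {S : Type*} [Semiring S]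
    {H : Ω → Type*} [∀ i, AddCommMonoid (H i)] [∀ i, Module S (H i)]
    (hH : (∀ i : Ω, ∃ x : H i, x ≠ 0) ∨ Hierarchical Ω) (ω : Ω → ℝ) (hω : ∀ i, 0 < ω i) :
    (∀ φ ∈ weightGL S H ω, ∃ lam : Ω ≃o Ω,
      ((∀ i ∉ Kset H, lam i = i) ∧ ∀ α, idl (hsupp (φ α)) = lam '' idl (hsupp α)) ∧
      lam ∈ labelAut S H ω ∧
      ∀ lam' : Ω ≃o Ω,
        ((∀ i ∉ Kset H, lam' i = i) ∧ ∀ α, idl (hsupp (φ α)) = lam' '' idl (hsupp α)) →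
          lam' = lam) ∧
    (∀ ψ : (∀ i, H i) ≃ₗ[S] (∀ i, H i),
      (∃ μ ∈ labelAut S H ω, ∀ α, idl (hsupp (ψ α)) = μ '' idl (hsupp α)) →
        ψ ∈ weightGL S H ω) ∧
    ∃ ζ : weightGL S H ω →* labelAut S H ω,
      (∀ φ α, idl (hsupp (φ.1 α)) = (ζ φ).1 '' idl (hsupp α)) ∧
      (∀ ζ' : weightGL S H ω → labelAut S H ω,
        (∀ φ α, idl (hsupp (φ.1 α)) = (ζ' φ).1 '' idl (hsupp α)) → ζ' = ζ) ∧
      Function.Surjective ζ ∧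
      ζ.ker = (supportGL S H).subgroupOf (weightGL S H ω) := by
  classical
  refine ⟨fun φ hφ ↦ ?_, fun ψ ⟨μ, hμ, h⟩ ↦ mem_weightGL_of_idl_hsupp_map hμ h,
    leadHom hH hω, fun φ ↦ idl_hsupp_map hH hω φ.2, fun ζ' h ↦ ?_,
    leadHom_surjective hH hω, ker_leadHom hH hω⟩
  · have hQ := leadIso_mem_labelAut hH hω hφ
    exact ⟨leadIso hH hω hφ, ⟨hQ.1, idl_hsupp_map hH hω hφ⟩, hQ,
      fun _ h ↦ eq_leadIso hH hω hφ h.1 h.2⟩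
  · exact funext fun φ ↦ Subtype.ext (eq_leadIso hH hω φ.2 (ζ' φ).2.1 (h φ))

theorem stmt4 {Ω : Type*} [Fintype Ω] [Nonempty Ω] [PartialOrder Ω]
    {S : Type*} [Ring S] {H : Ω → Type*} [∀ i, AddCommGroup (H i)] [∀ i, Module S (H i)]
    (hassum : (∀ i : Ω, ∃ x : H i, x ≠ 0) ∨ Hierarchical Ω)
    (ω : Ω → ℝ) (hω : ∀ i : Ω, 0 < ω i) :
    -- (i)
    (∀ φ : (∀ i, H i) ≃ₗ[S] (∀ i, H i), GLw S H ω φ →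
      ∃ lam : Ω ≃o Ω,
        ((∀ i ∉ Kset H, lam i = i) ∧
          ∀ α : ∀ i, H i, idl (hsupp (φ α)) = lam '' idl (hsupp α)) ∧
        Qpred S H ω lam ∧
        ∀ lam' : Ω ≃o Ω,
          ((∀ i ∉ Kset H, lam' i = i) ∧
            ∀ α : ∀ i, H i, idl (hsupp (φ α)) = lam' '' idl (hsupp α)) → lam' = lam) ∧
    -- (ii)
    (∀ ψ : (∀ i, H i) ≃ₗ[S] (∀ i, H i),
      (∃ μ : Ω ≃o Ω, Qpred S H ω μ ∧
        ∀ α : ∀ i, H i, idl (hsupp (ψ α)) = μ '' idl (hsupp α)) → GLw S H ω ψ) ∧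
    -- (iii)
    (∃ ζ : {φ : (∀ i, H i) ≃ₗ[S] (∀ i, H i) // GLw S H ω φ} → {μ : Ω ≃o Ω // Qpred S H ω μ},
      (∀ φ, ∀ α : ∀ i, H i, idl (hsupp (φ.1 α)) = (ζ φ).1 '' idl (hsupp α)) ∧
      (∀ ζ' : {φ : (∀ i, H i) ≃ₗ[S] (∀ i, H i) // GLw S H ω φ} →
          {μ : Ω ≃o Ω // Qpred S H ω μ},
        (∀ φ, ∀ α : ∀ i, H i, idl (hsupp (φ.1 α)) = (ζ' φ).1 '' idl (hsupp α)) → ζ' = ζ) ∧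
      (∀ φ ψ χ : {φ : (∀ i, H i) ≃ₗ[S] (∀ i, H i) // GLw S H ω φ},
        (∀ α : ∀ i, H i, χ.1 α = φ.1 (ψ.1 α)) →
          ∀ i : Ω, (ζ χ).1 i = (ζ φ).1 ((ζ ψ).1 i)) ∧
      (∀ μ : {μ : Ω ≃o Ω // Qpred S H ω μ},
        ∃ φ : {φ : (∀ i, H i) ≃ₗ[S] (∀ i, H i) // GLw S H ω φ}, ζ φ = μ) ∧
      (∀ φ : {φ : (∀ i, H i) ≃ₗ[S] (∀ i, H i) // GLw S H ω φ},
        (∀ i : Ω, (ζ φ).1 i = i) ↔ GLPsupp S H φ.1)) := by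
  obtain ⟨h₁, h₂, ζ, hζ, hunique, hsurj, hker⟩ := stmt4_general (S := S) hassum ω hω
  exact ⟨h₁, h₂, ζ, hζ, hunique,
    fun (φ ψ χ : weightGL S H ω) h i ↦ by
      rw [show χ = φ * ψ from Subtype.ext (LinearEquiv.ext h), map_mul]; rfl,
    hsurj, fun φ ↦ (Subtype.ext_iff.trans DFunLike.ext_iff).symm.trans (SetLike.ext_iff.1 hker φ)⟩
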